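/- The modular discriminant Δ satisfies the third-order nonlinear ODE: for every τ ∈ ℍ, 36Δ⁴(Δ''')² − 14(18ΔΔ'' − 13(Δ')²)Δ²Δ'Δ''' + 48Δ³(Δ'')³ + 285Δ²(Δ')²(Δ'')² − 468Δ(Δ')⁴Δ'' + 169(Δ')⁶ + 48Δ⁷ = 0. -/

import Mathlib

open Complex

noncomputable section

/-- The normalized derivative `F' = (2πi)⁻¹ dF/dτ`. -/
def nderiv (F : ℂ → ℂ) : ℂ → ℂ := fun τ => (2 * Real.pi * Complex.I)⁻¹ * deriv F τ

/-- `q = e^{2πiτ}`. -/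
def qq (τ : ℂ) : ℂ := Complex.exp (2 * Real.pi * Complex.I * τ)

/-- The modular discriminant `Δ(τ) = q ∏_{n≥1} (1 − qⁿ)²⁴`. -/
def Δ : ℂ → ℂ := fun τ => qq τ * ∏' n : ℕ, (1 - qq τ ^ (n + 1)) ^ 24

open UpperHalfPlane hiding I
open Real Filter ModularForm EisensteinSeries Derivative
open scoped Manifold MatrixGroups ModularForm Topology

/-- Transfer between `nderiv` on `ℂ` and `D` on `ℍ`. -/
lemma nderiv_eq_D {G : ℂ → ℂ} {F : ℍ → ℂ} (h : ∀ z : ℍ, G z = F z) (z : ℍ) :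
    nderiv G z = D F z := by
  unfold nderiv normalizedDerivOfComplex
  congr 1
  apply Filter.EventuallyEq.deriv_eq
  filter_upwards [isOpen_upperHalfPlaneSet.mem_nhds z.im_pos] with w hw
  rw [Function.comp_apply, ofComplex_apply_of_im_pos hw, ← h]

/-- The derivative of a bounded holomorphic function tends to zero at `i∞`. -/
lemma D_isZero {F : ℍ → ℂ} (hF : MDiff F) (hb : IsBoundedAtImInfty F) :
    Tendsto (D F) atImInfty (𝓝 0) := by
  rw [isBoundedAtImInfty_iff] at hb
  obtain ⟨M, A, hM⟩ := hb
  rw [UpperHalfPlane.mdifferentiable_iff] at hF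
  have him : Tendsto UpperHalfPlane.im atImInfty atTop := tendsto_comap
  have hlim : Tendsto (fun z : ℍ => ‖(2 * π * I : ℂ)⁻¹‖ * (M / (z.im / 2))) atImInfty (𝓝 0) := by
    have h1 : Tendsto (fun z : ℍ => M / (z.im / 2)) atImInfty (𝓝 0) :=
      (him.atTop_div_const (by norm_num : (0:ℝ) < 2)).const_div_atTop M
    simpa using h1.const_mul ‖(2 * π * I : ℂ)⁻¹‖
  refine squeeze_zero_norm' ?_ hlim
  filter_upwards [him.eventually_ge_atTop (2 * A)] with z hz
  unfold normalizedDerivOfComplex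
  rw [norm_mul]
  gcongr
  have key : ∀ w ∈ Metric.closedBall (z : ℂ) (z.im / 2), z.im / 2 ≤ w.im := by
    intro w hw
    have h1 := (Complex.abs_im_le_norm (w - z)).trans (by simpa [dist_eq_norm] using hw)
    have h2 := (abs_le.mp h1).1
    simp at h2
    linarith
  have hz0 := z.im_pos
  refine Complex.norm_deriv_le_of_forall_mem_sphere_norm_le (by positivity) ?_ ?_
  · refine DifferentiableOn.diffContOnCl (hF.mono ?_)
    intro w hw
    have := key w (Metric.closure_ball_subset_closedBall hw)
    exact lt_of_lt_of_le (by positivity) this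
  · intro w hw
    have h1 := key w (Metric.sphere_subset_closedBall hw)
    have h2 : 0 < w.im := by linarith
    rw [Function.comp_apply, ofComplex_apply_of_im_pos h2]
    apply hM
    change A ≤ w.im
    linarith

lemma bdd_of_tendsto {F : ℍ → ℂ} {c : ℂ} (h : Tendsto F atImInfty (𝓝 c)) :
    IsBoundedAtImInfty F := h.isBigO_one ℝ

/-- A weakly modular holomorphic function of weight `< 12` vanishing at `i∞` is zero. -/
lemma zero_of_slash {k : ℤ} (hk : k < 12) {F : ℍ → ℂ} (hF : MDiff F)
    (hs : ∀ γ : SL(2, ℤ), F ∣[k] γ = F) (h0 : Tendsto F atImInfty (𝓝 0)) : F = 0 := by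
  let f : CuspForm 𝒮ℒ k :=
    { toFun := F
      slash_action_eq' := by
        rintro A ⟨γ, rfl⟩
        exact hs γ
      holo' := hF
      zero_at_cusps' := by
        intro c hc
        rw [Subgroup.IsArithmetic.isCusp_iff_isCusp_SL2Z] at hc
        rw [OnePoint.isZeroAt_iff_forall_SL2Z hc]
        intro γ _
        rw [hs γ]
        exact h0 }
  have : f = 0 := rank_zero_iff_forall_zero.mp (CuspForm.rank_eq_zero_of_weight_lt_twelve hk) f
  exact congrArg DFunLike.coe this

lemma tendsto_E {k : ℕ} (hk : 3 ≤ k) (hk2 : Even k) :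
    Tendsto (E hk) atImInfty (𝓝 1) := by
  have hanal := ModularFormClass.analyticAt_cuspFunction_zero (E hk) one_pos
    one_mem_strictPeriods_SL
  have hper := SlashInvariantFormClass.periodic_comp_ofComplex (E hk) one_mem_strictPeriods_SL
  have hv : cuspFunction 1 (E hk) 0 = 1 := by
    rw [← E_qExpansion_coeff_zero hk hk2, qExpansion_coeff_zero one_pos hanal hper,
      cuspFunction_apply_zero one_pos hanal hper]
  rw [← hv]
  exact (hanal.continuousAt.tendsto.comp (qParam_tendsto_atImInfty one_pos)).congr
    (fun τ ↦ SlashInvariantFormClass.eq_cuspFunction (E hk) τ one_mem_strictPeriods_SL one_ne_zero)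

lemma D_disc : D discriminant = E2 * discriminant := by
  ext z
  have hd := differentiableAt_eta_of_mem_upperHalfPlaneSet z.2
  have hl := logDeriv_eta_eq_E2 z
  rw [logDeriv_apply, div_eq_iff (eta_ne_zero z.2)] at hl
  have : D discriminant z = nderiv (fun w => ModularForm.eta w ^ 24) z :=
    (nderiv_eq_D (G := fun w => ModularForm.eta w ^ 24) (F := discriminant) (fun z => rfl) z).symm
  rw [this, nderiv, deriv_fun_pow hd, hl]
  simp only [Pi.mul_apply, discriminant]
  have := Complex.I_ne_zero
  have : (π : ℂ) ≠ 0 := by simp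
  push_cast
  field_simp
  norm_num
  left
  ring

lemma disc_mdiff : MDiff discriminant := CuspForm.discriminant.holo'

lemma E2_slash (γ : SL(2, ℤ)) (z : ℍ) : (E2 ∣[(2 : ℤ)] γ) z =
    E2 z - 6 * I / π * (γ 1 0 / denom γ z) := by
  rw [E2_slash_action]
  have : (π : ℂ) ≠ 0 := by simp
  simp [D2, riemannZeta_two]
  field_simp

lemma D_denom (γ : SL(2, ℤ)) (z : ℍ) :
    D (fun z : ℍ => (γ 1 0 : ℂ) / denom γ z) z =
      -(2 * π * I)⁻¹ * ((γ 1 0 : ℂ) / denom γ z) ^ 2 := by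
  rw [← nderiv_eq_D (G := fun w : ℂ => (γ 1 0 : ℂ) * (denom γ w) ^ (-1 : ℤ))
    (fun z => by simp [div_eq_mul_inv]) z, nderiv]
  have h := ((hasDerivAt_denom_zpow (γ : GL (Fin 2) ℝ) (-1) z).const_mul (γ 1 0 : ℂ)).deriv
  rw [h]
  have := denom_ne_zero γ z
  simp [zpow_neg, zpow_ofNat]
  field_simp

lemma tendsto_E2 : Tendsto E2 atImInfty (𝓝 1) := by
  let P : ℍ → ℂ := fun x : ℍ ↦ ∏' (n : ℕ), (1 - eta_q n x) ^ 24
  have hP : Tendsto P atImInfty (𝓝 1) := tendsto_atImInfty_tprod_one_sub_eta_q_pow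
  have hPd : MDiff P := by
    rw [UpperHalfPlane.mdifferentiable_iff]
    have : DifferentiableOn ℂ (fun w : ℂ => (∏' n : ℕ, (1 - eta_q n w)) ^ 24) {z | 0 < z.im} :=
      fun w hw => ((differentiableAt_eta_tprod hw).pow 24).differentiableWithinAt
    refine this.congr fun w hw => ?_
    rw [Function.comp_apply, ofComplex_apply_of_im_pos hw]
    exact (multipliableLocallyUniformlyOn_eta.multipliable hw).tprod_pow _
  have hq : MDiff (fun z : ℍ => Function.Periodic.qParam 1 z) := by
    rw [UpperHalfPlane.mdifferentiable_iff]
    have : DifferentiableOn ℂ (Function.Periodic.qParam 1) {z | 0 < z.im} := by fun_prop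
    refine this.congr fun z hz => ?_
    rw [Function.comp_apply, ofComplex_apply_of_im_pos hz]
  have hDq (z : ℍ) : D (fun z : ℍ => Function.Periodic.qParam 1 z) z =
      Function.Periodic.qParam 1 z := by
    rw [← nderiv_eq_D (G := Function.Periodic.qParam 1) (fun z => rfl) z, nderiv]
    have hl := logDeriv_qParam 1 z
    rw [logDeriv_apply, div_eq_iff (Function.Periodic.qParam_ne_zero _)] at hl
    rw [hl]
    have : (π : ℂ) ≠ 0 := by simp
    push_cast
    field_simp
  have hdisc : discriminant = (fun z : ℍ => Function.Periodic.qParam 1 z) * P := by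
    ext z
    exact discriminant_eq_q_prod z
  have hE (z : ℍ) : 1 + D P z / P z = E2 z := by
    have h1 := congrFun D_disc z
    have h0 := discriminant_ne_zero z
    rw [hdisc] at h0 h1
    rw [normalizedDerivOfComplex_mul _ _ hq hPd] at h1
    simp only [Pi.add_apply, Pi.mul_apply, hDq] at h0 h1
    have ha := left_ne_zero_of_mul h0
    have hb := right_ne_zero_of_mul h0
    field_simp
    apply mul_left_cancel₀ ha
    linear_combination h1
  have := ((D_isZero hPd (bdd_of_tendsto hP)).div hP one_ne_zero).const_add 1
  simpa using this.congr hE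

lemma E4_mdiff : MDiff (E₄ : ℍ → ℂ) := E₄.holo'
lemma E6_mdiff : MDiff (E₆ : ℍ → ℂ) := E₆.holo'

lemma E2_aux_slash (γ : SL(2, ℤ)) (z : ℍ) :
    ((D E2 - (12⁻¹ : ℂ) • (E2 * E2)) ∣[(4 : ℤ)] γ) z =
      (D E2 - (12⁻¹ : ℂ) • (E2 * E2)) z := by
  have hs : (E2 ∣[(2 : ℤ)] γ) =
      E2 - (6 * I / π) • (fun z : ℍ => (γ 1 0 : ℂ) / denom γ z) := by
    ext z
    simp only [E2_slash, Pi.sub_apply, Pi.smul_apply, smul_eq_mul]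
  have md : MDiff (fun z : ℍ => (γ 1 0 : ℂ) / denom γ z) := by
    rw [UpperHalfPlane.mdifferentiable_iff]
    have : DifferentiableOn ℂ (fun w : ℂ => (γ 1 0 : ℂ) * (denom γ w) ^ (-1 : ℤ))
        {z | 0 < z.im} := fun w hw =>
      ((hasDerivAt_denom_zpow (γ : GL (Fin 2) ℝ) (-1) ⟨w, hw⟩).const_mul
        (γ 1 0 : ℂ)).differentiableAt.differentiableWithinAt
    refine this.congr fun w hw => ?_
    rw [Function.comp_apply, ofComplex_apply_of_im_pos hw]
    simp [div_eq_mul_inv]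
  have h1 := congrFun (normalizedDerivOfComplex_SL_slash (k := 2) E2_mdifferentiable (γ := γ)) z
  have h2 : ((E2 * E2) ∣[(4 : ℤ)] γ) z = (E2 ∣[(2 : ℤ)] γ) z * (E2 ∣[(2 : ℤ)] γ) z :=
    congrFun (ModularForm.mul_slash_SL2 2 2 γ E2 E2) z
  rw [hs, normalizedDerivOfComplex_sub _ _ E2_mdifferentiable (md.const_smul _),
    normalizedDerivOfComplex_smul _ _ md] at h1
  simp only [Pi.sub_apply, Pi.smul_apply, smul_eq_mul, D_denom] at h1
  rw [show (2 : ℤ) + 2 = 4 by norm_num] at h1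
  rw [E2_slash] at h2
  rw [sub_eq_add_neg, SlashAction.add_slash, SlashAction.neg_slash, ModularForm.SL_smul_slash]
  simp only [Pi.add_apply, Pi.neg_apply, Pi.smul_apply, smul_eq_mul, Pi.mul_apply]
  rw [h2]
  generalize (D E2 ∣[(4 : ℤ)] γ) z = X at *
  generalize (γ 1 0 : ℂ) / denom γ z = t at *
  have hX : X = D E2 z - 6 * I / π * (-(2 * π * I)⁻¹ * t ^ 2) +
      (2 : ℤ) * (2 * π * I)⁻¹ * t * (E2 z - 6 * I / π * t) := by
    rw [h1]; ring
  rw [hX]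
  have hπ : (π : ℂ) ≠ 0 := by simp
  have hI := Complex.I_ne_zero
  have hI2 := Complex.I_sq
  push_cast
  field_simp
  ring_nf
  simp only [hI2, Complex.I_pow_three]
  ring

lemma form_slash {k : ℤ} (f : ModularForm 𝒮ℒ k) (γ : SL(2, ℤ)) : (f : ℍ → ℂ) ∣[k] γ = f :=
  f.slash_action_eq' _ ⟨γ, rfl⟩

/-- Ramanujan's identity for `E2`. -/
lemma D_E2 (z : ℍ) : D E2 z = (E2 z ^ 2 - E₄ z) / 12 := by
  have hE4 : Tendsto (E₄ : ℍ → ℂ) atImInfty (𝓝 1) := tendsto_E _ ⟨2, rfl⟩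
  have m1 : MDiff (E2 * E2) := E2_mdifferentiable.mul E2_mdifferentiable
  have hz : (D E2 - (12⁻¹ : ℂ) • (E2 * E2)) + (12⁻¹ : ℂ) • (E₄ : ℍ → ℂ) = 0 := by
    refine zero_of_slash (k := 4) (by norm_num) ?_ ?_ ?_
    · exact ((normalizedDerivOfComplex_mdifferentiable E2_mdifferentiable).sub
        (m1.const_smul _)).add (E4_mdiff.const_smul _)
    · intro γ
      ext z
      rw [SlashAction.add_slash, Pi.add_apply, E2_aux_slash, ModularForm.SL_smul_slash,
        form_slash E₄ γ]
      rfl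
    · have := ((D_isZero E2_mdifferentiable (bdd_of_tendsto tendsto_E2)).sub
        ((tendsto_E2.mul tendsto_E2).const_mul (12⁻¹ : ℂ))).add (hE4.const_mul (12⁻¹ : ℂ))
      convert this using 2 <;> norm_num
  have := congrFun hz z
  simp only [Pi.add_apply, Pi.mul_apply, Pi.smul_apply, Pi.sub_apply, smul_eq_mul,
    Pi.zero_apply] at this
  linear_combination this

/-- Ramanujan's identity for `E₄`. -/
lemma D_E4 (z : ℍ) : D E₄ z = (E2 z * E₄ z - E₆ z) / 3 := by
  have hE4 : Tendsto (E₄ : ℍ → ℂ) atImInfty (𝓝 1) := tendsto_E _ ⟨2, rfl⟩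
  have hE6 : Tendsto (E₆ : ℍ → ℂ) atImInfty (𝓝 1) := tendsto_E _ ⟨3, rfl⟩
  have hz : serreDerivative ((4 : ℤ) : ℂ) E₄ + (3⁻¹ : ℂ) • (E₆ : ℍ → ℂ) = 0 := by
    refine zero_of_slash (k := 6) (by norm_num) ?_ ?_ ?_
    · exact (serreDerivative_mdifferentiable _ E4_mdiff).add (E6_mdiff.const_smul _)
    · intro γ
      have h1 := serreDerivative_slash_invariant (k := 4) E4_mdiff (form_slash E₄ γ)
      rw [show (4 : ℤ) + 2 = 6 by norm_num] at h1
      rw [SlashAction.add_slash, h1, ModularForm.SL_smul_slash, form_slash E₆ γ]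
    · have := ((D_isZero E4_mdiff (bdd_of_tendsto hE4)).sub
        ((tendsto_E2.const_mul (((4 : ℤ) : ℂ) * 12⁻¹)).mul hE4)).add (hE6.const_mul (3⁻¹ : ℂ))
      convert this using 2 <;> norm_num
  have := congrFun hz z
  simp only [Pi.add_apply, serreDerivative_apply, Pi.smul_apply, smul_eq_mul,
    Pi.zero_apply] at this
  push_cast at this
  linear_combination this

lemma D2_disc : D (D discriminant) =
    fun z => (13 * E2 z ^ 2 - E₄ z) / 12 * discriminant z := by
  ext z
  rw [D_disc, normalizedDerivOfComplex_mul _ _ E2_mdifferentiable disc_mdiff, D_disc]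
  simp only [Pi.add_apply, Pi.mul_apply, D_E2]
  ring

lemma D3_disc (z : ℍ) : D (D (D discriminant)) z =
    ((26 * E2 z * ((E2 z ^ 2 - E₄ z) / 12) - (E2 z * E₄ z - E₆ z) / 3) / 12
      + E2 z * (13 * E2 z ^ 2 - E₄ z) / 12) * discriminant z := by
  have h : (fun z => (13 * E2 z ^ 2 - E₄ z) / 12 * discriminant z) =
      ((12⁻¹ : ℂ) • ((13 : ℂ) • (E2 * E2) - (E₄ : ℍ → ℂ))) * discriminant := by
    ext z
    simp only [Pi.mul_apply, Pi.smul_apply, Pi.sub_apply, smul_eq_mul]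
    ring
  have m1 : MDiff (E2 * E2) := E2_mdifferentiable.mul E2_mdifferentiable
  have m2 : MDiff ((13 : ℂ) • (E2 * E2)) := m1.const_smul _
  have m3 : MDiff ((13 : ℂ) • (E2 * E2) - (E₄ : ℍ → ℂ)) := m2.sub E4_mdiff
  rw [D2_disc, h, normalizedDerivOfComplex_mul _ _ (m3.const_smul _) disc_mdiff,
    normalizedDerivOfComplex_smul _ _ m3, normalizedDerivOfComplex_sub _ _ m2 E4_mdiff,
    normalizedDerivOfComplex_smul _ _ m1,
    normalizedDerivOfComplex_mul _ _ E2_mdifferentiable E2_mdifferentiable, D_disc]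
  simp only [Pi.add_apply, Pi.mul_apply, Pi.smul_apply, Pi.sub_apply, smul_eq_mul, D_E2, D_E4]
  ring

lemma Δ_eq (z : ℍ) : Δ z = discriminant z := by
  rw [discriminant_eq_q_prod]
  simp [Δ, qq, eta_q, Function.Periodic.qParam]

/-- The modular discriminant satisfies a third-order nonlinear ODE. -/
theorem discriminant_third_order_ODE :
    ∀ τ : ℂ, 0 < τ.im →
      36 * Δ τ ^ 4 * (nderiv (nderiv (nderiv Δ)) τ) ^ 2 -
      14 * (18 * Δ τ * nderiv (nderiv Δ) τ - 13 * (nderiv Δ τ) ^ 2) * Δ τ ^ 2 *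
        nderiv Δ τ * nderiv (nderiv (nderiv Δ)) τ +
      48 * Δ τ ^ 3 * (nderiv (nderiv Δ) τ) ^ 3 +
      285 * Δ τ ^ 2 * (nderiv Δ τ) ^ 2 * (nderiv (nderiv Δ) τ) ^ 2 -
      468 * Δ τ * (nderiv Δ τ) ^ 4 * nderiv (nderiv Δ) τ +
      169 * (nderiv Δ τ) ^ 6 + 48 * Δ τ ^ 7 = 0 := by
  intro τ hτ
  obtain ⟨z, rfl⟩ : ∃ z : ℍ, (z : ℂ) = τ := ⟨⟨τ, hτ⟩, rfl⟩
  have h1 := nderiv_eq_D Δ_eq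
  have h2 := nderiv_eq_D h1
  have h3 := nderiv_eq_D h2
  have hD := discriminant_eq_E₄_cube_sub_E₆_sq z
  rw [h1, h2, h3, Δ_eq, D3_disc, D2_disc, D_disc]
  simp only [Pi.mul_apply]
  generalize E2 z = P at *
  generalize E₄ z = Q at *
  generalize E₆ z = R at *
  generalize discriminant z = d at *
  linear_combination 48 * d ^ 6 * hD
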